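/- Let μ be a positive Borel measure on [1,∞), let δ ∈ (0,1), N ∈ ℕ with N ≥ 1, and C > 0 be such that ∫_{[1,∞)} e^{−tx} dμ(x) ≤ C t^{−N} for all t ∈ (0,δ]. Then ∫_{[1,∞)} x^{−(N+1)} dμ(x) < ∞. -/

import Mathlib

open MeasureTheory Filter Real Set

open scoped ENNReal

/-!
If `t * x` stays in a compact subinterval of `(0, ∞)`, then `x ^ (-p)` and `t ^ p * exp (-t * x)`
are comparable. For every `x ≥ a` one of the dyadic times `t = δ / 2 ^ k` satisfies
`δ * a ≤ t * x < 2 * (δ * a)`, so on measures carried by `[a, ∞)` the inverse moment of order `p` is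
controlled by the sum of `t ^ p * L(μ)(t)` over these times. A bound `L(μ)(t) ≤ C * t ^ (-s)` with
`s < p` turns this sum into a convergent geometric series.
-/

/-- The Laplace transform `L(μ)(t)` of a positive measure on the real line, with values in `ℝ≥0∞`
so that it is meaningful without integrability assumptions. -/
noncomputable def laplaceTransform (μ : Measure ℝ) (t : ℝ) : ℝ≥0∞ :=
  ∫⁻ x, ENNReal.ofReal (exp (-t * x)) ∂μ

theorem exists_div_two_pow_mul_mem_Ico {a x δ : ℝ} (ha : 0 < a) (hax : a ≤ x) (hδ : 0 < δ) :
    ∃ k : ℕ, δ / 2 ^ k * x ∈ Ico (δ * a) (2 * (δ * a)) := by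
  obtain ⟨k, hk_le, hk_lt⟩ := exists_nat_pow_near ((one_le_div ha).2 hax) one_lt_two
  rw [le_div_iff₀ ha] at hk_le
  rw [div_lt_iff₀ ha, pow_succ] at hk_lt
  refine ⟨k, ?_, ?_⟩
  · rw [div_mul_eq_mul_div, le_div_iff₀ (by positivity)]
    nlinarith
  · rw [div_mul_eq_mul_div, div_lt_iff₀ (by positivity)]
    nlinarith

theorem rpow_neg_le_of_mul_mem_Icc {b c t x p : ℝ} (hb : 0 < b) (ht : 0 < t) (hp : 0 ≤ p)
    (htx : t * x ∈ Icc b c) :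
    x ^ (-p) ≤ exp c * b ^ (-p) * (t ^ p * exp (-t * x)) := by
  have hx : 0 < x := pos_of_mul_pos_right (hb.trans_le htx.1) ht.le
  have h_exp : 1 ≤ exp c * exp (-t * x) := by
    rw [← exp_add]
    exact one_le_exp (by linarith [htx.2])
  calc x ^ (-p) = (t * x) ^ (-p) * t ^ p := by
        rw [mul_rpow ht.le hx.le, mul_right_comm, ← rpow_add ht, neg_add_cancel, rpow_zero, one_mul]
    _ ≤ b ^ (-p) * t ^ p := by
        gcongr ?_ * _
        exact rpow_le_rpow_of_nonpos hb htx.1 (neg_nonpos.2 hp)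
    _ ≤ b ^ (-p) * t ^ p * (exp c * exp (-t * x)) := le_mul_of_one_le_right (by positivity) h_exp
    _ = exp c * b ^ (-p) * (t ^ p * exp (-t * x)) := by ring

theorem ofReal_rpow_neg_le_tsum_exp {a x δ p : ℝ} (ha : 0 < a) (hax : a ≤ x) (hδ : 0 < δ)
    (hp : 0 ≤ p) :
    ENNReal.ofReal (x ^ (-p)) ≤ ENNReal.ofReal (exp (2 * (δ * a)) * (δ * a) ^ (-p)) *
      ∑' k : ℕ, ENNReal.ofReal ((δ / 2 ^ k) ^ p) * ENNReal.ofReal (exp (-(δ / 2 ^ k) * x)) := by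
  obtain ⟨k, hk⟩ := exists_div_two_pow_mul_mem_Ico ha hax hδ
  have h_le := rpow_neg_le_of_mul_mem_Icc (by positivity) (by positivity) hp
    (Ico_subset_Icc_self hk)
  refine (ENNReal.ofReal_le_ofReal h_le).trans ?_
  rw [ENNReal.ofReal_mul (by positivity), ENNReal.ofReal_mul (p := (δ / 2 ^ k) ^ p) (by positivity)]
  gcongr
  exact ENNReal.le_tsum k

theorem lintegral_rpow_neg_le_tsum_laplaceTransform {μ : Measure ℝ} {a δ p : ℝ} (ha : 0 < a)
    (hμ : ∀ᵐ x ∂μ, a ≤ x) (hδ : 0 < δ) (hp : 0 ≤ p) :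
    ∫⁻ x, ENNReal.ofReal (x ^ (-p)) ∂μ ≤
      ENNReal.ofReal (exp (2 * (δ * a)) * (δ * a) ^ (-p)) *
        ∑' k : ℕ, ENNReal.ofReal ((δ / 2 ^ k) ^ p) * laplaceTransform μ (δ / 2 ^ k) := by
  refine (lintegral_mono_ae
    (hμ.mono fun x hax ↦ ofReal_rpow_neg_le_tsum_exp ha hax hδ hp)).trans_eq ?_
  rw [lintegral_const_mul _ (by fun_prop), lintegral_tsum fun k ↦ by fun_prop]
  congr! 3 with k
  exact lintegral_const_mul _ (by fun_prop)

theorem summable_div_two_pow_rpow {δ q : ℝ} (hδ : 0 ≤ δ) (hq : 0 < q) :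
    Summable fun k : ℕ ↦ (δ / 2 ^ k) ^ q := by
  have h_geometric (k : ℕ) : (δ / 2 ^ k) ^ q = δ ^ q * ((1 / 2) ^ q) ^ k := by
    rw [rpow_pow_comm (by positivity), ← mul_rpow hδ (by positivity), one_div_pow,
      mul_one_div]
  simp_rw [h_geometric]
  exact (summable_geometric_of_lt_one (by positivity)
    (rpow_lt_one (by norm_num) (by norm_num) hq)).mul_left _

theorem inverse_moment_of_laplace_bound_general {μ : Measure ℝ} {a δ s p C : ℝ} (ha : 0 < a)
    (hμ : ∀ᵐ x ∂μ, a ≤ x) (hδ : 0 < δ) (hp : 0 ≤ p) (hsp : s < p)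
    (hbound : ∀ t ∈ Ioc 0 δ, laplaceTransform μ t ≤ ENNReal.ofReal (C * t ^ (-s))) :
    ∫⁻ x, ENNReal.ofReal (x ^ (-p)) ∂μ < ⊤ := by
  have h_term (k : ℕ) : ENNReal.ofReal ((δ / 2 ^ k) ^ p) * laplaceTransform μ (δ / 2 ^ k) ≤
      ENNReal.ofReal (C * (δ / 2 ^ k) ^ (p - s)) := by
    have ht : 0 < δ / 2 ^ k := by positivity
    calc ENNReal.ofReal ((δ / 2 ^ k) ^ p) * laplaceTransform μ (δ / 2 ^ k)
        ≤ ENNReal.ofReal ((δ / 2 ^ k) ^ p) * ENNReal.ofReal (C * (δ / 2 ^ k) ^ (-s)) := by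
          gcongr
          exact hbound _ ⟨ht, div_le_self hδ.le (one_le_pow₀ one_le_two)⟩
      _ = ENNReal.ofReal (C * (δ / 2 ^ k) ^ (p - s)) := by
          rw [← ENNReal.ofReal_mul (by positivity), mul_left_comm, ← rpow_add ht, sub_eq_add_neg]
  have h_sum : ∑' k : ℕ, ENNReal.ofReal (C * (δ / 2 ^ k) ^ (p - s)) < ⊤ :=
    ((summable_div_two_pow_rpow hδ.le (sub_pos.2 hsp)).mul_left C).tsum_ofReal_lt_top
  exact (lintegral_rpow_neg_le_tsum_laplaceTransform ha hμ hδ hp).trans_lt <|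
    ENNReal.mul_lt_top ENNReal.ofReal_lt_top ((ENNReal.tsum_le_tsum h_term).trans_lt h_sum)

/-- If `μ` is a positive Borel measure on `[1,∞)`, `δ ∈ (0,1)`, `N ≥ 1` a natural number,
and `C > 0` with `∫_{[1,∞)} e^{-tx} dμ(x) ≤ C t^{-N}` for all `t ∈ (0,δ]`, then
`∫_{[1,∞)} x^{-(N+1)} dμ(x) < ∞`. -/
theorem inverse_moment_of_laplace_bound (μ : Measure ℝ) (hμ : μ (Set.Iio 1) = 0)
    (δ : ℝ) (hδ : δ ∈ Set.Ioo (0:ℝ) 1) (N : ℕ) (hN : 1 ≤ N) (C : ℝ) (hC : 0 < C)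
    (hbound : ∀ t ∈ Set.Ioc 0 δ,
      ∫⁻ x in Set.Ici (1:ℝ), ENNReal.ofReal (Real.exp (-t * x)) ∂μ ≤
        ENNReal.ofReal (C * t ^ (-(N:ℝ)))) :
    ∫⁻ x in Set.Ici (1:ℝ), ENNReal.ofReal ((x ^ (N + 1))⁻¹) ∂μ < ⊤ := by
  simpa only [rpow_neg_natCast, zpow_neg, zpow_natCast] using
    inverse_moment_of_laplace_bound_general (s := N) (p := (N + 1 : ℕ)) one_pos
      (ae_restrict_mem (s := Ici 1) measurableSet_Ici) hδ.1 (by positivity) (by simp) hbound
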